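/- Let g(z) = −z³ − (3/2)z (that is, g = g_{a,b} with (a,b) = (1/√2, 0)). Define A₊ = {z ∈ ℂ : g^{∘2n}(z) → i/√2 as n → ∞} and A₋ = {z ∈ ℂ : g^{∘2n}(z) → −i/√2 as n → ∞}. Then the point 0 lies in the closure of A₊ and also in the closure of A₋, although 0 belongs to neither set (0 being a repelling fixed point of g). -/

import Mathlib

/-- The cubic `g(z) = -z^3 - (3/2) z`, i.e. `g_{a,b}` with `(a,b) = (1/√2, 0)`. -/
noncomputable def gBitrans : ℂ → ℂ := fun z => -z ^ 3 - (3 / 2) * z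

/-- The set of points whose even iterates under `gBitrans` converge to `i/√2`. -/
def Aplus : Set ℂ :=
  {z | Filter.Tendsto (fun n => gBitrans^[2 * n] z) Filter.atTop
    (nhds (Complex.I / (Real.sqrt 2 : ℂ)))}

/-- The set of points whose even iterates under `gBitrans` converge to `-i/√2`. -/
def Aminus : Set ℂ :=
  {z | Filter.Tendsto (fun n => gBitrans^[2 * n] z) Filter.atTop
    (nhds (-(Complex.I / (Real.sqrt 2 : ℂ))))}

noncomputable def kRealMap : ℝ → ℝ := fun y => 3 / 2 * y - y ^ 3

lemma kRealMap_tendsto (c y : ℝ) (hc : c ^ 2 = 1 / 2) (hy : 0 < y) (hyc : y ≤ c) :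
    Filter.Tendsto (fun n => kRealMap^[n] y) Filter.atTop (nhds c) := by
  have hc0 : 0 < c := lt_of_lt_of_le hy hyc
  have hcy : 0 < c * y := mul_pos hc0 hy
  have hcy2 : c * y ≤ 1 / 2 := by nlinarith
  have key : ∀ n, y ≤ kRealMap^[n] y ∧ kRealMap^[n] y ≤ c ∧
      c - kRealMap^[n] y ≤ (1 - c * y) ^ n * (c - y) := by
    intro n
    induction n with
    | zero => simp [hyc]
    | succ n ih =>
      rw [Function.iterate_succ_apply']
      set x := kRealMap^[n] y with hx
      obtain ⟨h1, h2, h3⟩ := ih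
      have e1 : c - kRealMap x = (c - x) * (1 - c * x - x ^ 2) := by
        unfold kRealMap
        linear_combination x * hc
      have e2 : c - kRealMap x = (c - x) ^ 2 * (x + 2 * c) := by
        unfold kRealMap
        linear_combination (3 * x - 2 * c) * hc
      have hx0 : 0 < x := lt_of_lt_of_le hy h1
      have hcx : 0 ≤ c - x := by linarith
      have hk : 0 ≤ c - kRealMap x := by rw [e2]; positivity
      have hcyx : c * y ≤ c * x := by gcongr
      have hle : c - kRealMap x ≤ (c - x) * (1 - c * y) := by
        rw [e1]; exact mul_le_mul_of_nonneg_left (by nlinarith) hcx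
      refine ⟨?_, by linarith, ?_⟩
      · nlinarith
      · calc _ ≤ (c - x) * (1 - c * y) := hle
          _ ≤ ((1 - c * y) ^ n * (c - y)) * (1 - c * y) := by
            apply mul_le_mul_of_nonneg_right h3; linarith
          _ = _ := by ring
  have ht : Filter.Tendsto (fun n : ℕ => c - (1 - c * y) ^ n * (c - y)) Filter.atTop (nhds c) := by
    have := (tendsto_pow_atTop_nhds_zero_of_lt_one (r := 1 - c * y)
      (by linarith) (by linarith)).mul_const (c - y)
    simpa using this.const_sub c
  exact tendsto_of_tendsto_of_tendsto_of_le_of_le ht tendsto_const_nhds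
    (fun n => by have := (key n).2.2; simp only; linarith) (fun n => (key n).2.1)

lemma gBitrans_iter (y : ℝ) (n : ℕ) :
    gBitrans^[2 * n] ((y : ℂ) * Complex.I) = (kRealMap^[2 * n] y : ℝ) * Complex.I := by
  have h : Function.Semiconj (fun y : ℝ => (y : ℂ) * Complex.I) (kRealMap^[2]) (gBitrans^[2]) := by
    have hg : ∀ y : ℝ, gBitrans ((y : ℂ) * Complex.I) = ((-kRealMap y : ℝ) : ℂ) * Complex.I := by
      intro y
      simp only [gBitrans, kRealMap]
      push_cast
      linear_combination (-(y : ℂ) ^ 3 * Complex.I) * Complex.I_sq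
    intro y
    simp only [Function.iterate_succ, Function.iterate_zero, Function.comp, id]
    rw [hg, hg]
    congr 2
    simp only [kRealMap]
    ring
  rw [Function.iterate_mul, Function.iterate_mul]
  exact ((h.iterate_right n) y).symm

lemma gBitrans_iter_neg (z : ℂ) (n : ℕ) : gBitrans^[n] (-z) = -gBitrans^[n] z := by
  have h : Function.Semiconj (fun z : ℂ => -z) gBitrans gBitrans := by
    intro z
    simp only [gBitrans]
    ring
  exact ((h.iterate_right n) z).symm

lemma mem_Aplus_of (y : ℝ) (hy : 0 < y) (hyc : y ≤ (Real.sqrt 2)⁻¹) :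
    (y : ℂ) * Complex.I ∈ Aplus := by
  have h := kRealMap_tendsto (Real.sqrt 2)⁻¹ y (by rw [inv_pow]; norm_num) hy hyc
  have h2 : Filter.Tendsto (fun n : ℕ => 2 * n) Filter.atTop Filter.atTop :=
    Filter.tendsto_id.const_mul_atTop' (by norm_num)
  have h3 := ((Complex.continuous_ofReal.tendsto _).comp (h.comp h2)).mul_const Complex.I
  have e : Complex.I / (Real.sqrt 2 : ℂ) = (((Real.sqrt 2)⁻¹ : ℝ) : ℂ) * Complex.I := by
    push_cast; rw [div_eq_mul_inv, mul_comm]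
  unfold Aplus
  rw [Set.mem_ofPred_eq, e]
  simp only [gBitrans_iter]
  exact h3

lemma mem_Aminus_of (z : ℂ) (h : z ∈ Aplus) : -z ∈ Aminus := by
  unfold Aminus
  simp only [Set.mem_ofPred_eq, gBitrans_iter_neg]
  exact Filter.Tendsto.neg h

lemma zero_mem_closure_Aplus : (0 : ℂ) ∈ closure Aplus := by
  rw [Metric.mem_closure_iff]
  intro ε hε
  have hs : 0 < (Real.sqrt 2)⁻¹ := by positivity
  have hm : 0 < min (ε / 2) (Real.sqrt 2)⁻¹ := lt_min (by linarith) hs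
  refine ⟨_, mem_Aplus_of _ hm (min_le_right _ _), ?_⟩
  rw [dist_zero_left, norm_mul, Complex.norm_I, mul_one, Complex.norm_real, Real.norm_eq_abs,
    abs_of_pos hm]
  have := min_le_left (ε / 2) (Real.sqrt 2)⁻¹
  linarith

lemma gBitrans_iter_zero (n : ℕ) : gBitrans^[n] 0 = 0 :=
  Function.iterate_fixed (by simp [gBitrans]) n

lemma limit_ne_zero : Complex.I / (Real.sqrt 2 : ℂ) ≠ 0 := by
  apply div_ne_zero Complex.I_ne_zero
  simp

/-- The point `0` lies in the closure of each of the two superattracting basins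
`A₊` and `A₋` of `g(z) = -z^3 - (3/2)z`, but belongs to neither of them. -/
theorem zero_in_closures_not_in_basins :
    (0 : ℂ) ∈ closure Aplus ∧ (0 : ℂ) ∈ closure Aminus ∧
      (0 : ℂ) ∉ Aplus ∧ (0 : ℂ) ∉ Aminus := by
  refine ⟨zero_mem_closure_Aplus, ?_, ?_, ?_⟩
  · rw [Metric.mem_closure_iff]
    intro ε hε
    obtain ⟨b, hb, hd⟩ := Metric.mem_closure_iff.1 zero_mem_closure_Aplus ε hε
    refine ⟨-b, mem_Aminus_of b hb, ?_⟩
    simpa [dist_zero_left] using hd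
  · intro h
    simp only [Aplus, Set.mem_ofPred_eq, gBitrans_iter_zero] at h
    exact limit_ne_zero (tendsto_nhds_unique h tendsto_const_nhds)
  · intro h
    simp only [Aminus, Set.mem_ofPred_eq, gBitrans_iter_zero] at h
    exact limit_ne_zero (neg_eq_zero.1 (tendsto_nhds_unique h tendsto_const_nhds))
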